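/- arXiv:2605.24052 — 4 statements merged into one kernel-verified Lean document; each statement's English description precedes it below -/
import Mathlib

section
/- Let η > 0 and q ∈ (0,1). Define F : ℝ → ℝ by F(r) = q·exp(−η(r−1)²) + (1−q)·exp(−ηr²). Then F is differentiable with F'(q) = −2η·q(1−q)·( exp(−ηq²) − exp(−η(1−q)²) ). In particular, if q > 1/2 then F'(q) > 0 and if q < 1/2 then F'(q) < 0; hence for every q ∈ (0,1) with q ≠ 1/2, the truthful report r = q is not a maximizer of F: there exists r* ≠ q with F(r*) > F(q). -/
/-- Untruthfulness of the Hedge scheme: the expected weight multiplier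
`F(r) = q e^{−η(r−1)²} + (1−q) e^{−ηr²}` has nonzero derivative at the
truthful report `r = q` whenever `q ≠ 1/2`, so `r = q` is not a maximizer. -/
theorem stmt6 (η q : ℝ) (hη : 0 < η) (hq : q ∈ Set.Ioo (0:ℝ) 1) :
    let F : ℝ → ℝ := fun r =>
      q * Real.exp (-η * (r - 1) ^ 2) + (1 - q) * Real.exp (-η * r ^ 2)
    HasDerivAt F
      (-2 * η * q * (1 - q) *
        (Real.exp (-η * q ^ 2) - Real.exp (-η * (1 - q) ^ 2))) q ∧
    (q > 1/2 → 0 < -2 * η * q * (1 - q) *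
        (Real.exp (-η * q ^ 2) - Real.exp (-η * (1 - q) ^ 2))) ∧
    (q < 1/2 → -2 * η * q * (1 - q) *
        (Real.exp (-η * q ^ 2) - Real.exp (-η * (1 - q) ^ 2)) < 0) ∧
    (q ≠ 1/2 → ∃ r : ℝ, r ≠ q ∧ F r > F q) := by
  intro F
  obtain ⟨hq0, hq1⟩ := hq
  have hc : 0 < 2 * η * q * (1 - q) := by
    have : 0 < 1 - q := by linarith
    positivity
  have hderiv : HasDerivAt F
      (-2 * η * q * (1 - q) *
        (Real.exp (-η * q ^ 2) - Real.exp (-η * (1 - q) ^ 2))) q := by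
    have h₁ := (((((hasDerivAt_id q).sub_const 1).pow 2).const_mul (-η)).exp).const_mul q
    have h₂ := ((((hasDerivAt_id q).pow 2).const_mul (-η)).exp).const_mul (1 - q)
    refine (h₁.add h₂).congr_deriv ?_
    have hsq : (1 - q) ^ 2 = (q - 1) ^ 2 := by ring
    simp only [id, hsq, Pi.pow_apply]
    push_cast
    ring
  have hpos : q > 1 / 2 → 0 < -2 * η * q * (1 - q) *
      (Real.exp (-η * q ^ 2) - Real.exp (-η * (1 - q) ^ 2)) := by
    intro h
    have hexp : Real.exp (-η * q ^ 2) < Real.exp (-η * (1 - q) ^ 2) :=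
      Real.exp_lt_exp.mpr (by nlinarith)
    nlinarith
  have hneg : q < 1 / 2 → -2 * η * q * (1 - q) *
      (Real.exp (-η * q ^ 2) - Real.exp (-η * (1 - q) ^ 2)) < 0 := by
    intro h
    have hexp : Real.exp (-η * (1 - q) ^ 2) < Real.exp (-η * q ^ 2) :=
      Real.exp_lt_exp.mpr (by nlinarith)
    nlinarith
  refine ⟨hderiv, hpos, hneg, fun hne => ?_⟩
  by_contra! hmax
  have hlocal : IsLocalMax F q := Filter.Eventually.of_forall fun r => by
    rcases eq_or_ne r q with rfl | hr
    · exact le_rfl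
    · exact hmax r hr
  have hzero := hlocal.hasDerivAt_eq_zero hderiv
  rcases lt_or_gt_of_ne hne with h | h
  · exact (hneg h).ne hzero
  · exact (hpos h).ne' hzero
end

section
/- Let η > 0, let N ≥ 1 be an integer, and let q ∈ (0,1) with q ≠ 1/2. Define F : ℝ → ℝ by F(r) = q·exp(−ηN(r−1)²) + (1−q)·exp(−ηNr²). Then F'(q) = −2ηN·q(1−q)·( exp(−ηNq²) − exp(−ηN(1−q)²) ) ≠ 0, so the truthful report r = q is not a local maximizer of F; there exists r* ≠ q with F(r*) > F(q). -/
/-- Untruthfulness of the EXP3 scheme: the expected selected-weight multiplier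
`F(r) = q e^{−ηN(r−1)²} + (1−q) e^{−ηNr²}` has nonzero derivative at the
truthful report `r = q` when `q ≠ 1/2`, so `r = q` is not a (local) maximizer. -/
theorem stmt7 (η : ℝ) (hη : 0 < η) (N : ℕ) (hN : 1 ≤ N)
    (q : ℝ) (hq : q ∈ Set.Ioo (0:ℝ) 1) (hq2 : q ≠ 1/2) :
    let F : ℝ → ℝ := fun r =>
      q * Real.exp (-(η * N) * (r - 1) ^ 2) + (1 - q) * Real.exp (-(η * N) * r ^ 2)
    HasDerivAt F
      (-2 * (η * N) * q * (1 - q) *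
        (Real.exp (-(η * N) * q ^ 2) - Real.exp (-(η * N) * (1 - q) ^ 2))) q ∧
    -2 * (η * N) * q * (1 - q) *
        (Real.exp (-(η * N) * q ^ 2) - Real.exp (-(η * N) * (1 - q) ^ 2)) ≠ 0 ∧
    (∃ r : ℝ, r ≠ q ∧ F r > F q) := by
  intro F
  obtain ⟨hq0, hq1⟩ := hq
  have hc : η * N ≠ 0 := mul_ne_zero hη.ne' (Nat.cast_ne_zero.mpr (by omega))
  have hderiv : HasDerivAt F
      (-2 * (η * N) * q * (1 - q) *
        (Real.exp (-(η * N) * q ^ 2) - Real.exp (-(η * N) * (1 - q) ^ 2))) q := by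
    have h₁ := (((((hasDerivAt_id q).sub_const 1).pow 2).const_mul (-(η * N))).exp).const_mul q
    have h₀ := ((((hasDerivAt_id q).pow 2).const_mul (-(η * N))).exp).const_mul (1 - q)
    refine (h₁.add h₀).congr_deriv ?_
    have hsq : (1 - q) ^ 2 = (q - 1) ^ 2 := by ring
    simp only [hsq, id, Pi.pow_apply]
    push_cast
    ring
  have hne : -2 * (η * N) * q * (1 - q) *
      (Real.exp (-(η * N) * q ^ 2) - Real.exp (-(η * N) * (1 - q) ^ 2)) ≠ 0 := by
    refine mul_ne_zero (mul_ne_zero (mul_ne_zero (mul_ne_zero (by norm_num) hc) hq0.ne')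
      (sub_pos.mpr hq1).ne') (sub_ne_zero.mpr fun h => hq2 ?_)
    have hsq := mul_left_cancel₀ (neg_ne_zero.mpr hc) (Real.exp_injective h)
    linarith
  refine ⟨hderiv, hne, ?_⟩
  by_contra! hmax
  have hloc : IsLocalMax F q := Filter.Eventually.of_forall fun r => by
    rcases eq_or_ne r q with rfl | hr
    · exact le_rfl
    · exact hmax r hr
  exact hne (hloc.hasDerivAt_eq_zero hderiv)
end

section
/- Let 0 < α < 1/2, let w_i⁰, w_k⁰ > 0 with w_i⁰ < w_k⁰, and let (ℓ_i^s)_{s≥1}, (ℓ_k^s)_{s≥1} be sequences in [0,1] satisfying ℓ_k^s − ℓ_i^s ≥ Δ for all s, for some Δ > 0. Then for every integer τ with τ ≥ ln(w_k⁰ / w_i⁰)/(αΔ), the multiplicatively updated weights satisfy w_i⁰ · Π_{s=1}^{τ} (1 − α ℓ_i^s) ≥ w_k⁰ · Π_{s=1}^{τ} (1 − α ℓ_k^s). In particular, a newly-arriving worker whose per-slot loss is uniformly smaller by Δ overtakes an incumbent worker in weight within ⌈ln(w_k⁰/w_i⁰)/(αΔ)⌉ slots. -/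
open Finset

/-- A loss larger by `Δ` shrinks the update factor by at least `exp (-(α * Δ))`. -/
lemma one_sub_mul_le_mul_exp_of_gap {α a b Δ : ℝ} (hα0 : 0 ≤ α) (ha0 : 0 ≤ a)
    (ha : α * a ≤ 1) (hΔ : 0 ≤ Δ) (hgap : Δ ≤ b - a) :
    1 - α * b ≤ (1 - α * a) * Real.exp (-(α * Δ)) := by
  have hprod : 0 ≤ (α * a) * (α * Δ) := by positivity
  have hb : α * Δ ≤ α * (b - a) := mul_le_mul_of_nonneg_left hgap hα0
  calc 1 - α * b ≤ (1 - α * a) * (1 - α * Δ) := by linarith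
    _ ≤ (1 - α * a) * Real.exp (-(α * Δ)) :=
      mul_le_mul_of_nonneg_left (Real.one_sub_le_exp_neg _) (by linarith)

/-- Catch-up time bound: a newly-arriving worker `i` with uniformly smaller
per-slot loss (gap `Δ`) overtakes the incumbent `k` in multiplicatively updated
weight within `⌈ln(w_k⁰/w_i⁰)/(αΔ)⌉` slots. -/
theorem stmt12 (α : ℝ) (hα0 : 0 < α) (hα : α < 1/2)
    (wi wk : ℝ) (hwi : 0 < wi) (hwk : 0 < wk) (hlt : wi < wk)
    (ℓi ℓk : ℕ → ℝ)
    (hℓi : ∀ s, ℓi s ∈ Set.Icc (0:ℝ) 1) (hℓk : ∀ s, ℓk s ∈ Set.Icc (0:ℝ) 1)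
    (Δ : ℝ) (hΔ : 0 < Δ) (hgap : ∀ s, Δ ≤ ℓk s - ℓi s)
    (τ : ℕ) (hτ : Real.log (wk / wi) / (α * Δ) ≤ (τ : ℝ)) :
    wk * ∏ s ∈ Finset.Icc 1 τ, (1 - α * ℓk s)
      ≤ wi * ∏ s ∈ Finset.Icc 1 τ, (1 - α * ℓi s) := by
  have hle_one : ∀ ℓ ∈ Set.Icc (0:ℝ) 1, α * ℓ ≤ 1 := fun ℓ hℓ =>
    mul_le_one₀ (by linarith) hℓ.1 hℓ.2
  have hprod : ∏ s ∈ Finset.Icc 1 τ, (1 - α * ℓk s)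
      ≤ (∏ s ∈ Finset.Icc 1 τ, (1 - α * ℓi s)) * Real.exp (-(τ * (α * Δ))) := by
    calc ∏ s ∈ Finset.Icc 1 τ, (1 - α * ℓk s)
        ≤ ∏ s ∈ Finset.Icc 1 τ, (1 - α * ℓi s) * Real.exp (-(α * Δ)) :=
          Finset.prod_le_prod (fun s _ => sub_nonneg.2 (hle_one _ (hℓk s))) fun s _ =>
            one_sub_mul_le_mul_exp_of_gap hα0.le (hℓi s).1 (hle_one _ (hℓi s)) hΔ.le (hgap s)
      _ = _ := by
          rw [Finset.prod_mul_distrib, Finset.prod_const, Nat.card_Icc, Nat.add_sub_cancel,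
            ← Real.exp_nat_mul, mul_neg]
  have hweight : wk * Real.exp (-(τ * (α * Δ))) ≤ wi := by
    rw [div_le_iff₀ (mul_pos hα0 hΔ), Real.log_le_iff_le_exp (div_pos hwk hwi),
      div_le_iff₀ hwi] at hτ
    rwa [Real.exp_neg, ← div_eq_mul_inv, div_le_iff₀ (Real.exp_pos _), mul_comm wi]
  calc wk * ∏ s ∈ Finset.Icc 1 τ, (1 - α * ℓk s)
      ≤ wk * ((∏ s ∈ Finset.Icc 1 τ, (1 - α * ℓi s)) * Real.exp (-(τ * (α * Δ)))) :=
        mul_le_mul_of_nonneg_left hprod hwk.le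
    _ = wk * Real.exp (-(τ * (α * Δ))) * ∏ s ∈ Finset.Icc 1 τ, (1 - α * ℓi s) := by ring
    _ ≤ wi * ∏ s ∈ Finset.Icc 1 τ, (1 - α * ℓi s) :=
        mul_le_mul_of_nonneg_right hweight
          (Finset.prod_nonneg fun s _ => sub_nonneg.2 (hle_one _ (hℓi s)))
end

section
/- Let N ≥ 2, T ≥ 1, α > 0, and let (ℓ̃_i^t) for i ∈ {1,...,N}, t ∈ {1,...,T} be nonnegative reals with α·ℓ̃_i^t ≤ 1/2 for all i, t. Define γ_i^1 = 1 and γ_i^{t+1} = γ_i^t·(1 − α ℓ̃_i^t). Then for every index k ∈ {1,...,N}: Σ_{t=1}^T (Σ_{i=1}^N γ_i^t ℓ̃_i^t)/(Σ_{i'=1}^N γ_{i'}^t) − Σ_{t=1}^T ℓ̃_k^t ≤ (ln N)/α + (α/2)·Σ_{t=1}^T (Σ_{i=1}^N γ_i^t (ℓ̃_i^t)²)/(Σ_{i'=1}^N γ_{i'}^t) + α·Σ_{t=1}^T (ℓ̃_k^t)². -/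
open Finset

/-- The lower bound `-x - x² ≤ log (1 - x)` on `[0, 1/2]`. -/
lemma neg_sub_sq_le_log_one_sub {x : ℝ} (hx0 : 0 ≤ x) (hx : x ≤ 1 / 2) :
    -x - x ^ 2 ≤ Real.log (1 - x) := by
  have hexp : 1 + (x + x ^ 2) + (x + x ^ 2) ^ 2 / 2 ≤ Real.exp (x + x ^ 2) :=
    Real.quadratic_le_exp_of_nonneg (by positivity)
  have hone : 1 ≤ (1 - x) * Real.exp (x + x ^ 2) := by
    refine le_trans ?_ (mul_le_mul_of_nonneg_left hexp (by linarith))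
    have hpoly : 0 ≤ 1 - x - x ^ 2 - x ^ 3 := by
      nlinarith [mul_nonneg hx0 (sub_nonneg.2 hx), pow_nonneg hx0 2,
        mul_nonneg (pow_nonneg hx0 2) (sub_nonneg.2 hx)]
    nlinarith [mul_nonneg (sq_nonneg x) hpoly]
  rw [Real.le_log_iff_exp_le (by linarith), show -x - x ^ 2 = -(x + x ^ 2) by ring, Real.exp_neg]
  exact (inv_le_iff_one_le_mul₀ (Real.exp_pos _)).2 hone

/-- One multiplicative update decreases the logarithm of the total weight by at least
`α` times the weighted average loss. -/
lemma log_sum_mul_one_sub_le {ι : Type*} [Fintype ι] {w l : ι → ℝ} {α : ℝ}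
    (hw : 0 < ∑ i, w i) (hw' : 0 < ∑ i, w i * (1 - α * l i)) :
    Real.log (∑ i, w i * (1 - α * l i)) - Real.log (∑ i, w i)
      ≤ -(α * ((∑ i, w i * l i) / ∑ i, w i)) := by
  have hsum : ∑ i, w i * (1 - α * l i) = ∑ i, w i - α * ∑ i, w i * l i := by
    rw [mul_sum, ← sum_sub_distrib]
    exact sum_congr rfl fun i _ => by ring
  rw [← Real.log_div hw'.ne' hw.ne']
  refine (Real.log_le_sub_one_of_pos (div_pos hw' hw)).trans (le_of_eq ?_)
  rw [hsum]
  field_simp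
  ring

/-- Core deterministic regret inequality for the online mixed selection
mechanism (Theorem 2): with auxiliary weights `γ_i^{t+1} = γ_i^t (1 − α ℓ̃_i^t)`
and bounded estimators `α ℓ̃_i^t ≤ 1/2`, the weight-averaged estimated loss
exceeds that of any fixed index `k` by at most
`(ln N)/α + (α/2) Σ_t ⟨(ℓ̃^t)²⟩_γ + α Σ_t (ℓ̃_k^t)²`. -/
theorem stmt16 (N T : ℕ) (hN : 2 ≤ N) (hT : 1 ≤ T)
    (α : ℝ) (hα : 0 < α)
    (ℓ : Fin T → Fin N → ℝ) (hℓ0 : ∀ t i, 0 ≤ ℓ t i)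
    (hℓ : ∀ t i, α * ℓ t i ≤ 1/2)
    (γ : ℕ → Fin N → ℝ) (hγ0 : ∀ i, γ 0 i = 1)
    (hγrec : ∀ (t : Fin T) (i : Fin N), γ (t.1 + 1) i = γ t.1 i * (1 - α * ℓ t i))
    (k : Fin N) :
    (∑ t : Fin T, (∑ i, γ t.1 i * ℓ t i) / (∑ i, γ t.1 i)) - ∑ t : Fin T, ℓ t k
      ≤ Real.log N / α
        + (α / 2) * ∑ t : Fin T, (∑ i, γ t.1 i * (ℓ t i) ^ 2) / (∑ i, γ t.1 i)
        + α * ∑ t : Fin T, (ℓ t k) ^ 2 := by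
  have hpos : ∀ n ≤ T, ∀ i, 0 < γ n i := by
    intro n
    induction n with
    | zero => intro _ i; simp [hγ0]
    | succ n ih =>
      intro hn i
      rw [hγrec ⟨n, hn⟩ i]
      exact mul_pos (ih (by omega) i) (by linarith [hℓ ⟨n, hn⟩ i])
  have hWpos : ∀ n ≤ T, 0 < ∑ i, γ n i := fun n hn =>
    sum_pos (fun i _ => hpos n hn i) ⟨k, mem_univ k⟩
  have htele : ∀ f : ℕ → ℝ, ∑ t : Fin T, (f (t.1 + 1) - f t.1) = f T - f 0 := fun f => by
    rw [Fin.sum_univ_eq_sum_range (fun n => f (n + 1) - f n), sum_range_sub]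
  have hupper : Real.log (∑ i, γ T i) - Real.log N
      ≤ -(α * ∑ t : Fin T, (∑ i, γ t.1 i * ℓ t i) / (∑ i, γ t.1 i)) := by
    have h := htele fun n => Real.log (∑ i, γ n i)
    simp only [hγ0, sum_const, card_univ, Fintype.card_fin, nsmul_eq_mul, mul_one] at h
    rw [← h, mul_sum, ← sum_neg_distrib]
    refine sum_le_sum fun t _ => ?_
    have hW' := hWpos (t.1 + 1) t.2
    simp only [hγrec t] at hW' ⊢
    exact log_sum_mul_one_sub_le (hWpos t.1 t.2.le) hW'
  have hlower : -(α * ∑ t : Fin T, ℓ t k) - α ^ 2 * ∑ t : Fin T, (ℓ t k) ^ 2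
      ≤ Real.log (γ T k) := by
    have h := htele fun n => Real.log (γ n k)
    simp only [hγ0, Real.log_one, sub_zero] at h
    rw [← h, mul_sum, mul_sum, ← sum_neg_distrib, ← sum_sub_distrib]
    refine sum_le_sum fun t _ => ?_
    rw [hγrec t k, Real.log_mul (hpos t.1 t.2.le k).ne' (by linarith [hℓ t k])]
    have hlog := neg_sub_sq_le_log_one_sub (mul_nonneg hα.le (hℓ0 t k)) (hℓ t k)
    linarith [mul_pow α (ℓ t k) 2]
  have hmono : Real.log (γ T k) ≤ Real.log (∑ i, γ T i) :=
    Real.log_le_log (hpos T le_rfl k)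
      (single_le_sum (fun i _ => (hpos T le_rfl i).le) (mem_univ k))
  have hsecond : 0 ≤ ∑ t : Fin T, (∑ i, γ t.1 i * (ℓ t i) ^ 2) / (∑ i, γ t.1 i) :=
    sum_nonneg fun t _ => div_nonneg
      (sum_nonneg fun i _ => mul_nonneg (hpos t.1 t.2.le i).le (sq_nonneg _))
      (hWpos t.1 t.2.le).le
  have hfirst : (∑ t : Fin T, (∑ i, γ t.1 i * ℓ t i) / (∑ i, γ t.1 i)) - ∑ t : Fin T, ℓ t k
      - α * ∑ t : Fin T, (ℓ t k) ^ 2 ≤ Real.log N / α := by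
    rw [le_div_iff₀ hα]
    linarith
  linarith [mul_nonneg (half_pos hα).le hsecond]
end
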